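/- Let d = 2d' with d' ≥ 2 and let f ∈ ℂ[x_0,x_1,x_2]_d be such that the plane curve V(f) ⊂ ℙ^2 is smooth. Then for a generic linear form ℓ ∈ R_1 (in particular, for at least one linear form ℓ), multiplication by ℓ² induces an isomorphism of ℂ-vector spaces M(f)_{3d'−4} → M(f)_{3d'−2}. -/

import Mathlib

/-!
The partial derivatives of `f` are three forms `g₀, g₁, g₂` of degree `e = 2d' - 1`, and by the
Nullstellensatz smoothness means that the ideal `J` they generate contains powers of all variables.
Hence `g` has no nonzero syzygy of degree less than `e`, which gives the dimensions of the two
graded pieces. They agree, so that everything comes down to a determinant, a polynomial in the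
coefficients of `ℓ`, being nonzero, and for this it suffices to treat `ℓ = x₂ - s x₀ - t x₁` with
indeterminates `s, t`: if `ℓ² h = r ⬝ g` with `r` of degree at most `d' - 1` in `x`, then `h ∈ J`.

Modulo `ℓ²` the relation is a syzygy of `g` on the first order neighbourhood of the generic line
`ℓ = 0`, that is, a pair `(a, b)` of degrees `d' - 1` and `d' - 2`, where `a` is a syzygy on the
line and `b` is the normal derivative. Differentiating the relation for `a` by `s` and by `t`, and
eliminating with the relation for `b`, gives the further syzygies `∂ₛa - x₀ b` and `∂ₜa - x₁ b` on
the line. Two syzygies on the line whose degrees add up to less than `e` are proportional, as their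
cross product is a multiple of `g`; here the sum is at most `2d' - 2 < e`. Hence `a` is proportional
to `D a`, where `D = x₁ ∂ₛ - x₀ ∂ₜ` is differentiation along the pencil of lines through a point.
Dividing by the common factor of the entries of `a` leaves a syzygy killed by `D`, because `D`
lowers the degree in `s, t`. Such a syzygy is constant along the pencils, so it comes from a syzygy
of `g` on the plane, of degree less than `e`, and vanishes. Then `a = 0`, so `b` is itself a syzygy
on the line, and the same argument gives `b = 0`. Consequently `ℓ²` divides `r`, and `h` lies in
`J`.
-/

open MvPolynomial Module

/-- The Jacobian ideal `J(f)`, generated by the first order partial derivatives of `f`. -/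
noncomputable def jacobianIdeal {N : ℕ} (f : MvPolynomial (Fin N) ℂ) :
    Ideal (MvPolynomial (Fin N) ℂ) :=
  Ideal.span (Set.range fun i => pderiv i f)

/-- The degree-`m` graded piece of the quotient `R ⧸ I`, namely the image of the
space of homogeneous polynomials of degree `m`. -/
noncomputable def gradedPiece {N : ℕ} (I : Ideal (MvPolynomial (Fin N) ℂ)) (m : ℕ) :
    Submodule ℂ (MvPolynomial (Fin N) ℂ ⧸ I) :=
  Submodule.map (Ideal.Quotient.mkₐ ℂ I).toLinearMap (homogeneousSubmodule (Fin N) ℂ m)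

section CrossProduct

open scoped Matrix

variable {B : Type*} [CommRing B]

lemma smul_eq_smul_of_cross_eq_zero {u v : Fin 3 → B} (h : u ⨯₃ v = 0) (w : Fin 3 → B) :
    (w ⬝ᵥ u) • v = (w ⬝ᵥ v) • u := by
  have triple := cross_cross_eq_smul_sub_smul' w u v
  rw [h, map_zero, dotProduct_comm u w] at triple
  exact (sub_eq_zero.1 triple.symm).symm

lemma mul_eq_mul_of_cross_eq_zero {u v : Fin 3 → B} (h : u ⨯₃ v = 0) (i j : Fin 3) :
    u i * v j = v i * u j := by
  simpa using congrFun (smul_eq_smul_of_cross_eq_zero h (Pi.single i 1)) j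

variable [IsDomain B] {g : Fin 3 → B}

lemma exists_eq_smul_of_cross_eq_zero {v : Fin 3 → B} {p q : B}
    (hp : p ∈ Ideal.span (Set.range g)) (hq : q ∈ Ideal.span (Set.range g)) (hp0 : p ≠ 0)
    (hpq : ∀ y, p ∣ q * y → p ∣ y) (h : g ⨯₃ v = 0) : ∃ l : B, v = l • g := by
  obtain ⟨c, rfl⟩ := Ideal.mem_span_range_iff_exists_fun.1 hp
  obtain ⟨c', rfl⟩ := Ideal.mem_span_range_iff_exists_fun.1 hq
  change c ⬝ᵥ g ≠ 0 at hp0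
  change ∀ y, c ⬝ᵥ g ∣ c' ⬝ᵥ g * y → c ⬝ᵥ g ∣ y at hpq
  have hc := smul_eq_smul_of_cross_eq_zero h c
  obtain ⟨l, hl⟩ : c ⬝ᵥ g ∣ c ⬝ᵥ v := by
    refine hpq _ ⟨c' ⬝ᵥ v, ?_⟩
    simpa [mul_comm] using (congrArg (c' ⬝ᵥ ·) hc).symm
  refine ⟨l, smul_right_injective _ hp0 ?_⟩
  simp only [hc, hl, mul_smul]

/-- Exactness of the Koszul complex in the middle. -/
lemma exists_eq_cross_of_dotProduct_eq_zero {s : Fin 3 → B} {p : Fin 3 → B}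
    (hp : ∀ i, p i ∈ Ideal.span (Set.range g)) (hp0 : p 0 ≠ 0)
    (hp1 : ∀ y, p 0 ∣ p 1 * y → p 0 ∣ y)
    (hp2 : ∀ y, p 2 * y ∈ Ideal.span {p 0, p 1} → y ∈ Ideal.span {p 0, p 1})
    (hs : s ⬝ᵥ g = 0) : ∃ r, s = g ⨯₃ r := by
  choose c hc using fun i => Ideal.mem_span_range_iff_exists_fun.1 (hp i)
  -- Contracting the syzygy with `p i = c i ⬝ᵥ g` solves `g ⨯₃ τ i = p i • s`.
  let τ : Fin 3 → Fin 3 → B := fun i => s ⨯₃ c i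
  have hτ (i) : g ⨯₃ τ i = p i • s := by
    have hci : g ⬝ᵥ c i = p i := (dotProduct_comm _ _).trans (hc i)
    rw [cross_cross_eq_smul_sub_smul', hs, zero_smul, sub_zero, hci]
  have hτ_sub (i j) : ∃ l : B, p j • τ i - p i • τ j = l • g :=
    exists_eq_smul_of_cross_eq_zero (hp 0) (hp 1) hp0 hp1 <| by
      rw [map_sub, map_smul, map_smul, hτ, hτ, smul_comm, sub_self]
  obtain ⟨l₀₁, h₀₁⟩ := hτ_sub 0 1
  obtain ⟨l₁₂, h₁₂⟩ := hτ_sub 1 2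
  obtain ⟨l₀₂, h₀₂⟩ := hτ_sub 0 2
  have hg : g ≠ 0 := by
    rintro rfl
    exact hp0 (by simpa using (hc 0).symm)
  have cocycle : p 2 * l₀₁ = p 1 * l₀₂ - p 0 * l₁₂ := by
    refine smul_left_injective B hg ?_
    simp only [mul_smul, sub_smul, ← h₀₁, ← h₁₂, ← h₀₂]
    module
  obtain ⟨a, b, hab⟩ := Ideal.mem_span_pair.1 <| hp2 l₀₁ <|
    Ideal.mem_span_pair.2 ⟨-l₁₂, l₀₂, by rw [cocycle]; ring⟩
  have hdvd (k) : p 0 ∣ (τ 0 - b • g) k := by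
    refine hp1 _ ⟨(τ 1 + a • g) k, ?_⟩
    have := congrFun h₀₁ k
    simp only [← hab, Pi.sub_apply, Pi.add_apply, Pi.smul_apply, smul_eq_mul] at this ⊢
    linear_combination this
  choose r hr using hdvd
  refine ⟨r, smul_right_injective _ hp0 ?_⟩
  calc
    p 0 • s = g ⨯₃ (τ 0 - b • g) := by
      rw [map_sub, map_smul, cross_self, smul_zero, sub_zero, hτ]
    _ = p 0 • g ⨯₃ r := by rw [← map_smul]; exact congrArg _ (funext hr)

end CrossProduct

section PowersOfVariables

variable {σ R : Type*} [CommRing R]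

lemma X_mem_radical_span {K : Type*} [Field K] [IsAlgClosed K] [Finite σ]
    {S : Set (MvPolynomial σ K)} (h : ∀ x : σ → K, x ≠ 0 → ∃ p ∈ S, eval x p ≠ 0) (i : σ) :
    X i ∈ (Ideal.span S).radical := by
  rw [← vanishingIdeal_zeroLocus_eq_radical (K := K), mem_vanishingIdeal_iff, zeroLocus_span]
  intro x hx
  obtain rfl : x = 0 := by
    by_contra hx0
    obtain ⟨p, hp, hpx⟩ := h x hx0
    exact hpx (hx p hp)
  rw [aeval_X, Pi.zero_apply]

lemma X_pow_dvd_of_dvd_mul [IsDomain R] {i j : σ} (hij : i ≠ j) {m n : ℕ} {y : MvPolynomial σ R}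
    (h : X i ^ m ∣ X j ^ n * y) : X i ^ m ∣ y :=
  X_prime.pow_dvd_of_dvd_mul_left m (fun hd => hij (X_dvd_X.1 (X_prime.dvd_of_dvd_pow hd))) h

lemma mem_span_pair_X_pow_of_mul_mem {i j k : σ} (hik : k ≠ i) (hjk : k ≠ j) {l m n : ℕ}
    {y : MvPolynomial σ R} (h : X k ^ n * y ∈ Ideal.span {X i ^ l, X j ^ m}) :
    y ∈ Ideal.span {X i ^ l, X j ^ m} := by
  let S : Set (σ →₀ ℕ) := {Finsupp.single i l, Finsupp.single j m}
  have hS : ({X i ^ l, X j ^ m} : Set (MvPolynomial σ R)) = (fun s => monomial s 1) '' S := by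
    simp [S, Set.image_pair, X_pow_eq_monomial]
  rw [hS, mem_ideal_span_monomial_image] at h ⊢
  intro u hu
  obtain ⟨s, hs, hle⟩ := h (Finsupp.single k n + u) <| by
    rw [MvPolynomial.mem_support_iff] at hu ⊢
    rwa [X_pow_eq_monomial, coeff_monomial_mul, one_mul]
  refine ⟨s, hs, fun a => ?_⟩
  have hsk : s k = 0 := by
    obtain rfl | rfl := hs
    · exact Finsupp.single_eq_of_ne hik
    · exact Finsupp.single_eq_of_ne hjk
  obtain rfl | hak := eq_or_ne a k
  · simp [hsk]
  · simpa [Finsupp.single_eq_of_ne hak] using hle a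

lemma eq_zero_of_mem_span_of_totalDegree_lt {ι : Type*} {e : ℕ} {g : ι → MvPolynomial σ R}
    (hg : ∀ i, (g i).IsHomogeneous e) {p : MvPolynomial σ R}
    (hp : p ∈ Ideal.span (Set.range g)) (hpe : p.totalDegree < e) : p = 0 := by
  have hspan : Ideal.span (Set.range g) ≤ idealOfVars σ R ^ e := by
    rw [Ideal.span_le, Set.range_subset_iff]
    exact fun i => (mem_pow_idealOfVars_iff' _ _).2 fun u hu => (hg i).coeff_eq_zero hu.ne
  ext u
  obtain hu | hu := lt_or_ge u.degree e
  · exact (mem_pow_idealOfVars_iff' _ _).1 (hspan hp) u hu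
  · exact coeff_eq_zero_of_totalDegree_lt (hpe.trans_le hu)

open scoped Matrix in
lemma syzygy_eq_zero [IsDomain R] {e : ℕ} {g s : Fin 3 → MvPolynomial (Fin 3) R}
    (hg : ∀ i, (g i).IsHomogeneous e) (hX : ∀ i, X i ∈ (Ideal.span (Set.range g)).radical)
    (hs : s ⬝ᵥ g = 0) (hse : ∀ i, (s i).totalDegree < e) : s = 0 := by
  choose N hN using hX
  obtain ⟨r, rfl⟩ := exists_eq_cross_of_dotProduct_eq_zero hN (pow_ne_zero _ (X_ne_zero 0))
    (fun _ => X_pow_dvd_of_dvd_mul (by decide))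
    (fun _ => mem_span_pair_X_pow_of_mul_mem (by decide) (by decide)) hs
  have hmem (i) : g i ∈ Ideal.span (Set.range g) := Ideal.subset_span ⟨i, rfl⟩
  refine funext fun i => eq_zero_of_mem_span_of_totalDegree_lt hg ?_ (hse i)
  rw [cross_apply]
  fin_cases i <;>
    exact sub_mem (Ideal.mul_mem_right _ _ (hmem _)) (Ideal.mul_mem_right _ _ (hmem _))

end PowersOfVariables

section WeightedDegree

variable {σ τ R S : Type*} [CommRing R] [CommRing S]

/-- The substitution `xᵢ ↦ xᵢ T ^ wᵢ`, which separates the weighted homogeneous components of a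
polynomial as the coefficients of the powers of `T`. -/
noncomputable def dilation (w : σ → ℕ) :
    MvPolynomial σ R →ₐ[R] Polynomial (MvPolynomial σ R) :=
  aeval fun i => Polynomial.C (X i) * Polynomial.X ^ w i

lemma dilation_X (w : σ → ℕ) (i : σ) :
    dilation w (X i : MvPolynomial σ R) = Polynomial.C (X i) * Polynomial.X ^ w i :=
  aeval_X _ _

lemma dilation_C (w : σ → ℕ) (r : R) : dilation w (C r) = Polynomial.C (C r) :=
  aeval_C _ _

lemma dilation_monomial (w : σ → ℕ) (u : σ →₀ ℕ) (r : R) :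
    dilation w (monomial u r) =
      Polynomial.C (monomial u r) * Polynomial.X ^ Finsupp.weight w u := by
  simp only [monomial_eq, Finsupp.prod, map_mul, map_prod, map_pow, dilation_C, dilation_X,
    mul_pow, Finset.prod_mul_distrib, ← pow_mul, Finset.prod_pow_eq_pow_sum, mul_assoc,
    Finsupp.weight_apply, Finsupp.sum, smul_eq_mul, mul_comm (w _)]

lemma coeff_dilation (w : σ → ℕ) (p : MvPolynomial σ R) (n : ℕ) :
    (dilation w p).coeff n = weightedHomogeneousComponent w n p := by
  classical
  induction p using MvPolynomial.induction_on' with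
  | add p q hp hq => rw [map_add, Polynomial.coeff_add, hp, hq, map_add]
  | monomial u r =>
    rw [dilation_monomial, Polynomial.coeff_C_mul_X_pow,
      weightedHomogeneousComponent_of_mem (isWeightedHomogeneous_monomial w u r rfl)]

lemma natDegree_dilation (w : σ → ℕ) (p : MvPolynomial σ R) :
    (dilation w p).natDegree = weightedTotalDegree w p := by
  refine le_antisymm (Polynomial.natDegree_le_iff_coeff_eq_zero.2 fun n hn => ?_)
    (Finset.sup_le fun u hu => Polynomial.le_natDegree_of_ne_zero fun h => ?_)
  · rw [coeff_dilation]
    exact weightedHomogeneousComponent_eq_zero n p hn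
  · classical
    rw [coeff_dilation] at h
    have := coeff_weightedHomogeneousComponent (w := w) (Finsupp.weight w u) p u
    rw [h, coeff_zero, if_pos rfl] at this
    exact MvPolynomial.mem_support_iff.1 hu this.symm

lemma dilation_injective (w : σ → ℕ) :
    Function.Injective (dilation w : MvPolynomial σ R →ₐ[R] _) := by
  refine (injective_iff_map_eq_zero _).2 fun p hp => ?_
  rw [← finsum_weightedHomogeneousComponent w p]
  simp only [← coeff_dilation, hp, Polynomial.coeff_zero, finsum_zero]

lemma weightedTotalDegree_mul_le (w : σ → ℕ) (p q : MvPolynomial σ R) :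
    weightedTotalDegree w (p * q) ≤ weightedTotalDegree w p + weightedTotalDegree w q := by
  simpa only [← natDegree_dilation, map_mul] using Polynomial.natDegree_mul_le

lemma weightedTotalDegree_sub_le (w : σ → ℕ) (p q : MvPolynomial σ R) :
    weightedTotalDegree w (p - q) ≤ max (weightedTotalDegree w p) (weightedTotalDegree w q) := by
  simpa only [← natDegree_dilation, map_sub] using Polynomial.natDegree_sub_le _ _

lemma weightedTotalDegree_le_of_dvd [IsDomain R] (w : σ → ℕ) {p q : MvPolynomial σ R} (h : p ∣ q)
    (hq : q ≠ 0) : weightedTotalDegree w p ≤ weightedTotalDegree w q := by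
  simpa only [← natDegree_dilation] using Polynomial.natDegree_le_of_dvd (map_dvd (dilation w) h)
    ((map_ne_zero_iff _ (dilation_injective w)).2 hq)

lemma weightedTotalDegree_X [Nontrivial R] (w : σ → ℕ) (i : σ) :
    weightedTotalDegree w (X i : MvPolynomial σ R) = w i := by
  rw [← natDegree_dilation, dilation_X, Polynomial.natDegree_C_mul_X_pow _ _ (X_ne_zero i)]

lemma weight_add_le_weightedTotalDegree {w : σ → ℕ} {i : σ} {p : MvPolynomial σ R} {u : σ →₀ ℕ}
    (hu : u ∈ (pderiv i p).support) : Finsupp.weight w u + w i ≤ weightedTotalDegree w p := by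
  rw [MvPolynomial.mem_support_iff, coeff_pderiv] at hu
  have := le_weightedTotalDegree w (MvPolynomial.mem_support_iff.2 (left_ne_zero_of_mul hu))
  rwa [map_add, Finsupp.weight_single, one_smul] at this

lemma weightedTotalDegree_pderiv_le (w : σ → ℕ) (i : σ) (p : MvPolynomial σ R) :
    weightedTotalDegree w (pderiv i p) ≤ weightedTotalDegree w p - w i :=
  Finset.sup_le fun _ hu => Nat.le_sub_of_add_le (weight_add_le_weightedTotalDegree hu)

lemma pderiv_eq_zero_of_weightedTotalDegree_lt {w : σ → ℕ} {i : σ} {p : MvPolynomial σ R}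
    (h : weightedTotalDegree w p < w i) : pderiv i p = 0 := by
  by_contra hne
  obtain ⟨u, hu⟩ := MvPolynomial.support_nonempty.2 hne
  exact (((Nat.le_add_left _ _).trans (weight_add_le_weightedTotalDegree hu)).trans_lt h).false

section GradedHom

variable {w : σ → ℕ} {w' : τ → ℕ} {φ : MvPolynomial σ R →+* MvPolynomial τ S}
  (hC : ∀ r, dilation w' (φ (C r)) = Polynomial.C (φ (C r)))
  (hX : ∀ i, dilation w' (φ (X i)) = Polynomial.C (φ (X i)) * Polynomial.X ^ w i)

include hC hX

lemma dilation_gradedHom (p : MvPolynomial σ R) :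
    dilation w' (φ p) = (dilation w p).map φ := by
  suffices (dilation w' : _ →ₐ[S] _).toRingHom.comp φ =
      (Polynomial.mapRingHom φ).comp (dilation w : _ →ₐ[R] _).toRingHom from
    RingHom.congr_fun this p
  ext i
  · simp [hC]
  · simp [hX, dilation_X]

lemma weightedTotalDegree_gradedHom_le (p : MvPolynomial σ R) :
    weightedTotalDegree w' (φ p) ≤ weightedTotalDegree w p := by
  simpa only [← natDegree_dilation, dilation_gradedHom hC hX]
    using Polynomial.natDegree_map_le

lemma weightedTotalDegree_gradedHom_eq (hφ : Function.Injective φ) (p : MvPolynomial σ R) :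
    weightedTotalDegree w' (φ p) = weightedTotalDegree w p := by
  simpa only [← natDegree_dilation, dilation_gradedHom hC hX]
    using Polynomial.natDegree_map_eq_of_injective hφ _

end GradedHom

end WeightedDegree

section GenericLine

variable {R : Type*} [CommRing R]

/-- Restriction of a ternary form to the generic line `x₂ = s x₀ + t x₁`. The variables of the
target are `x₀, x₁, s, t`, in this order. -/
noncomputable def toLine : MvPolynomial (Fin 3) R →ₐ[R] MvPolynomial (Fin 4) R :=
  aeval ![X 0, X 1, X 2 * X 0 + X 3 * X 1]

/-- The weights for the degree in `x₀, x₁`. -/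
def xWeight : Fin 4 → ℕ := ![1, 1, 0, 0]

/-- The weights for the degree in `s, t`. -/
def stWeight : Fin 4 → ℕ := ![0, 0, 1, 1]

/-- The derivation `x₁ ∂_s - x₀ ∂_t`. It differentiates along the pencil of lines through the
point `(x₀ : x₁ : s x₀ + t x₁)`, keeping that point fixed. -/
noncomputable def pencilDer : Derivation R (MvPolynomial (Fin 4) R) (MvPolynomial (Fin 4) R) :=
  (X 1 : MvPolynomial (Fin 4) R) • pderiv 2 - (X 0 : MvPolynomial (Fin 4) R) • pderiv 3

lemma toLine_C (r : R) : toLine (C r) = C r := aeval_C _ _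

lemma toLine_X (i : Fin 3) :
    toLine (X i : MvPolynomial (Fin 3) R) = ![X 0, X 1, X 2 * X 0 + X 3 * X 1] i :=
  aeval_X _ _

lemma toLine_injective {K : Type*} [Field K] [Infinite K] :
    Function.Injective (toLine : MvPolynomial (Fin 3) K →ₐ[K] _) := by
  refine (injective_iff_map_eq_zero _).2 fun p hp => ?_
  have h : X 0 * p = 0 := MvPolynomial.funext fun y => by
    rw [map_mul, eval_X, map_zero, mul_eq_zero, or_iff_not_imp_left]
    intro hy
    -- The point `y` lies on the line with `s = y₂ / y₀` and `t = 0`.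
    have hev : (aeval ![y 0, y 1, y 2 / y 0, 0]).comp toLine = aeval (R := K) y := by
      ext i
      fin_cases i <;> simp [toLine_X, div_mul_cancel₀ _ hy]
    rw [← aeval_eq_eval, ← hev, AlgHom.comp_apply, hp, map_zero]
  exact (mul_eq_zero.1 h).resolve_left (X_ne_zero 0)

lemma dilation_toLine_C (r : R) :
    dilation xWeight (toLine (C r)) = Polynomial.C (toLine (C r)) := by
  rw [toLine_C, dilation_C]

lemma dilation_toLine_X (i : Fin 3) : dilation xWeight (toLine (X i : MvPolynomial (Fin 3) R)) =
    Polynomial.C (toLine (X i)) * Polynomial.X ^ (1 : Fin 3 → ℕ) i := by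
  fin_cases i <;> simp [toLine_X, dilation_X, xWeight]
  ring

lemma weightedTotalDegree_toLine {K : Type*} [Field K] [Infinite K] (p : MvPolynomial (Fin 3) K) :
    weightedTotalDegree xWeight (toLine p) = p.totalDegree := by
  rw [← weightedTotalDegree_one]
  exact weightedTotalDegree_gradedHom_eq (φ := toLine.toRingHom) dilation_toLine_C dilation_toLine_X
    toLine_injective p

lemma pencilDer_apply (p : MvPolynomial (Fin 4) R) :
    pencilDer p = X 1 * pderiv 2 p - X 0 * pderiv 3 p :=
  rfl

lemma pderiv_two_toLine (p : MvPolynomial (Fin 3) R) :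
    pderiv 2 (toLine p) = X 0 * toLine (pderiv 2 p) := by
  induction p using MvPolynomial.induction_on with
  | C a => simp
  | add p q hp hq => simp only [map_add, hp, hq, mul_add]
  | mul_X p i hp =>
    simp only [map_mul, Derivation.leibniz, smul_eq_mul, hp, map_add]
    fin_cases i <;> simp [toLine_X, pderiv_X] <;> ring

lemma pderiv_three_toLine (p : MvPolynomial (Fin 3) R) :
    pderiv 3 (toLine p) = X 1 * toLine (pderiv 2 p) := by
  induction p using MvPolynomial.induction_on with
  | C a => simp
  | add p q hp hq => simp only [map_add, hp, hq, mul_add]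
  | mul_X p i hp =>
    simp only [map_mul, Derivation.leibniz, smul_eq_mul, hp, map_add]
    fin_cases i <;> simp [toLine_X, pderiv_X] <;> ring

lemma pencilDer_toLine (p : MvPolynomial (Fin 3) R) : pencilDer (toLine p) = 0 := by
  rw [pencilDer_apply, pderiv_two_toLine, pderiv_three_toLine]
  ring

lemma weightedTotalDegree_X_mul_pderiv_le [Nontrivial R] (w : Fin 4 → ℕ) (i j : Fin 4)
    (p : MvPolynomial (Fin 4) R) :
    weightedTotalDegree w (X i * pderiv j p) ≤ w i + (weightedTotalDegree w p - w j) := by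
  refine (weightedTotalDegree_mul_le _ _ _).trans ?_
  rw [weightedTotalDegree_X]
  exact Nat.add_le_add_left (weightedTotalDegree_pderiv_le w j p) _

lemma weightedTotalDegree_xWeight_pencilDer_le [Nontrivial R] (p : MvPolynomial (Fin 4) R) :
    weightedTotalDegree xWeight (pencilDer p) ≤ 1 + weightedTotalDegree xWeight p :=
  (weightedTotalDegree_sub_le _ _ _).trans <| max_le
    (weightedTotalDegree_X_mul_pderiv_le _ 1 2 p) (weightedTotalDegree_X_mul_pderiv_le _ 0 3 p)

lemma weightedTotalDegree_stWeight_pencilDer_le [Nontrivial R] (p : MvPolynomial (Fin 4) R) :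
    weightedTotalDegree stWeight (pencilDer p) ≤ weightedTotalDegree stWeight p - 1 := by
  rw [← zero_add (_ - 1)]
  exact (weightedTotalDegree_sub_le _ _ _).trans <| max_le
    (weightedTotalDegree_X_mul_pderiv_le _ 1 2 p) (weightedTotalDegree_X_mul_pderiv_le _ 0 3 p)

/-- The derivation lowers the degree in `s, t`, which a nonzero multiple of `p` cannot do. -/
lemma pencilDer_eq_zero_of_dvd [IsDomain R] {p : MvPolynomial (Fin 4) R} (h : p ∣ pencilDer p) :
    pencilDer p = 0 := by
  by_contra hne
  have hle := (weightedTotalDegree_le_of_dvd stWeight h hne).trans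
    (weightedTotalDegree_stWeight_pencilDer_le p)
  have hlt : weightedTotalDegree stWeight p < 1 := by omega
  rw [pencilDer_apply, pderiv_eq_zero_of_weightedTotalDegree_lt (w := stWeight) (i := 2) hlt,
    pderiv_eq_zero_of_weightedTotalDegree_lt (w := stWeight) (i := 3) hlt] at hne
  simp at hne

end GenericLine

section PencilConstants

variable {R : Type*} [CommRing R]

lemma exists_X_two_dvd_monomial_sub_toLine {m : Fin 4 →₀ ℕ} (hm : m 3 ≤ m 1) (r : R) :
    ∃ q, X 2 ∣ monomial m r - toLine q := by
  have hmon : monomial m r = C r * (X 0 ^ m 0 * X 1 ^ m 1 * X 2 ^ m 2 * X 3 ^ m 3) := by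
    rw [monomial_eq, Finsupp.prod_fintype _ _ (by simp), Fin.prod_univ_four]
  obtain h2 | h2 := eq_or_ne (m 2) 0
  · refine ⟨C r * (X 0 ^ m 0 * X 1 ^ (m 1 - m 3) * X 2 ^ m 3), ?_⟩
    obtain ⟨a, ha⟩ :=
      sub_dvd_pow_sub_pow (X 3 * X 1) (X 2 * X 0 + X 3 * X 1 : MvPolynomial (Fin 4) R) (m 3)
    have hX : (X 1 : MvPolynomial (Fin 4) R) ^ m 1 = X 1 ^ (m 1 - m 3) * X 1 ^ m 3 := by
      rw [← pow_add, Nat.sub_add_cancel hm]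
    refine ⟨-(C r * X 0 ^ (m 0 + 1) * X 1 ^ (m 1 - m 3) * a), ?_⟩
    simp only [hmon, h2, hX, map_mul, map_pow, toLine_C, toLine_X, Matrix.cons_val]
    linear_combination (C r * X 0 ^ m 0 * X 1 ^ (m 1 - m 3)) * ha
  · refine ⟨0, ?_⟩
    rw [map_zero, sub_zero, hmon]
    exact ((dvd_pow_self _ h2).mul_left _).mul_right _ |>.mul_left _

variable [IsDomain R] [CharZero R]

lemma exists_coeff_ne_zero_of_X_mul_pderiv_eq {σ : Type*} {i j k l : σ} (hij : i ≠ j)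
    {p : MvPolynomial σ R} (h : X i * pderiv k p = X j * pderiv l p) {u : σ →₀ ℕ}
    (hu : coeff (u + Finsupp.single k 1) p ≠ 0) :
    ∃ v, u = v + Finsupp.single j 1 ∧
      coeff (v + Finsupp.single i 1 + Finsupp.single l 1) p ≠ 0 := by
  classical
  have hne : coeff (Finsupp.single i 1 + u) (X j * pderiv l p) ≠ 0 := by
    rw [← h, coeff_X_mul, coeff_pderiv]
    exact mul_ne_zero hu (Nat.cast_add_one_ne_zero _)
  rw [coeff_X_mul'] at hne
  split_ifs at hne with hj
  · obtain ⟨v, rfl⟩ : ∃ v, u = v + Finsupp.single j 1 := by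
      refine ⟨u - Finsupp.single j 1, (tsub_add_cancel_of_le (Finsupp.single_le_iff.2 ?_)).symm⟩
      simpa [hij, Nat.one_le_iff_ne_zero] using hj
    rw [← add_assoc, add_tsub_cancel_right, coeff_pderiv, add_comm _ v] at hne
    exact ⟨v, rfl, left_ne_zero_of_mul hne⟩
  · exact absurd rfl hne

variable {p : MvPolynomial (Fin 4) R} (hp : pencilDer p = 0)
include hp

lemma apply_three_le_apply_one_of_pencilDer_eq_zero {m : Fin 4 →₀ ℕ} (hm : coeff m p ≠ 0) :
    m 3 ≤ m 1 := by
  have h : X 0 * pderiv 3 p = X 1 * pderiv 2 p := (sub_eq_zero.1 hp).symm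
  generalize hn : m 3 = n
  induction n generalizing m with
  | zero => exact Nat.zero_le _
  | succ n ih =>
    obtain ⟨u, rfl⟩ : ∃ u, m = u + Finsupp.single 3 1 :=
      ⟨m - Finsupp.single 3 1, (tsub_add_cancel_of_le (Finsupp.single_le_iff.2 (by omega))).symm⟩
    obtain ⟨v, rfl, hv⟩ := exists_coeff_ne_zero_of_X_mul_pderiv_eq (by decide) h hm
    simpa using ih hv (by simpa using hn)

lemma exists_coeff_ne_zero_apply_two_eq_zero {m : Fin 4 →₀ ℕ} (hm : coeff m p ≠ 0) :
    ∃ m', coeff m' p ≠ 0 ∧ m' 2 = 0 := by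
  have h : X 1 * pderiv 2 p = X 0 * pderiv 3 p := sub_eq_zero.1 hp
  generalize hn : m 2 = n
  induction n generalizing m with
  | zero => exact ⟨m, hm, hn⟩
  | succ n ih =>
    obtain ⟨u, rfl⟩ : ∃ u, m = u + Finsupp.single 2 1 :=
      ⟨m - Finsupp.single 2 1, (tsub_add_cancel_of_le (Finsupp.single_le_iff.2 (by omega))).symm⟩
    obtain ⟨v, rfl, hv⟩ := exists_coeff_ne_zero_of_X_mul_pderiv_eq (by decide) h hm
    exact ih hv (by simpa using hn)

lemma eq_zero_of_X_two_dvd_of_pencilDer_eq_zero (hdvd : X 2 ∣ p) : p = 0 := by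
  by_contra hne
  obtain ⟨m, hm⟩ := MvPolynomial.ne_zero_iff.1 hne
  obtain ⟨m', hm', hm'2⟩ := exists_coeff_ne_zero_apply_two_eq_zero hp hm
  obtain ⟨q, rfl⟩ := hdvd
  rw [coeff_X_mul', if_neg (by simpa using hm'2)] at hm'
  exact hm' rfl

lemma exists_toLine_eq_of_pencilDer_eq_zero : ∃ q, toLine q = p := by
  have hmon (m : p.support) : ∃ q, X 2 ∣ monomial m (coeff m p) - toLine q :=
    exists_X_two_dvd_monomial_sub_toLine
      (apply_three_le_apply_one_of_pencilDer_eq_zero hp (MvPolynomial.mem_support_iff.1 m.2)) _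
  choose q hq using hmon
  refine ⟨∑ m, q m, (sub_eq_zero.1 (eq_zero_of_X_two_dvd_of_pencilDer_eq_zero ?_ ?_)).symm⟩
  · rw [map_sub, hp, pencilDer_toLine, sub_zero]
  · nth_rw 1 [p.as_sum]
    rw [map_sum, ← Finset.sum_coe_sort, ← Finset.sum_sub_distrib]
    exact Finset.dvd_sum fun m _ => hq m

end PencilConstants

section Derivation

open scoped Matrix

variable {R B ι : Type*} [CommRing R] [CommRing B] [Algebra R B]

lemma derivation_dotProduct [Fintype ι] (D : Derivation R B B) (u v : ι → B) :
    D (u ⬝ᵥ v) = u ⬝ᵥ D ∘ v + D ∘ u ⬝ᵥ v := by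
  simp only [dotProduct, map_sum, Derivation.leibniz, smul_eq_mul, Finset.sum_add_distrib,
    Function.comp_apply, mul_comm (D _)]

lemma exists_eq_smul_dvd_derivation [Finite ι] [IsDomain B] [UniqueFactorizationMonoid B]
    (D : Derivation R B B) {a : ι → B} (ha : ∀ i j, a i * D (a j) = D (a i) * a j) (ha0 : a ≠ 0) :
    ∃ γ : B, γ ≠ 0 ∧ ∃ b : ι → B, a = γ • b ∧ ∀ i, b i ∣ D (b i) := by
  classical
  have := Fintype.ofFinite ι
  let _ : StrongNormalizationMonoid B := UniqueFactorizationMonoid.strongNormalizationMonoid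
  let _ : NormalizedGCDMonoid B := UniqueFactorizationMonoid.toNormalizedGCDMonoid B
  obtain ⟨k, -⟩ := Function.ne_iff.1 ha0
  obtain ⟨b, hab, hb⟩ := Finset.extract_gcd a ⟨k, Finset.mem_univ k⟩
  set γ := Finset.univ.gcd a
  replace hab : a = γ • b := funext fun i => hab i (Finset.mem_univ i)
  have hγ : γ ≠ 0 := fun h => ha0 (by rw [hab, h, zero_smul])
  refine ⟨γ, hγ, b, hab, fun i => ?_⟩
  have hdvd (j) : b i ∣ b j * D (b i) := by
    refine ⟨D (b j), mul_left_cancel₀ (pow_ne_zero 2 hγ) ?_⟩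
    have := ha i j
    simp only [hab, Pi.smul_apply, smul_eq_mul, Derivation.leibniz] at this
    linear_combination -this
  -- The entries of `b` have no common factor, so their multiples of `D (b i)` have gcd `D (b i)`.
  calc b i ∣ Finset.univ.gcd fun j => b j * D (b i) := Finset.dvd_gcd fun j _ => hdvd j
    _ ∣ Finset.univ.gcd b * D (b i) := (Finset.gcd_mul_right' Finset.univ b (D (b i))).dvd
    _ = D (b i) := by rw [hb, one_mul]

end Derivation

section SyzygiesOnLine

open scoped Matrix

variable {K : Type*} [Field K] [CharZero K] {e : ℕ} {g : Fin 3 → MvPolynomial (Fin 3) K}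
  {a b : Fin 3 → MvPolynomial (Fin 4) K}
  (hg : ∀ i, (g i).IsHomogeneous e) (hX : ∀ i, X i ∈ (Ideal.span (Set.range g)).radical)
include hg hX

lemma eq_zero_of_pencilDer_eq_zero (ha : a ⬝ᵥ toLine ∘ g = 0) (hD : ∀ i, pencilDer (a i) = 0)
    (hae : ∀ i, weightedTotalDegree xWeight (a i) < e) : a = 0 := by
  choose s hs using fun i => exists_toLine_eq_of_pencilDer_eq_zero (hD i)
  obtain rfl : toLine ∘ s = a := funext hs
  have hs0 : s ⬝ᵥ g = 0 := toLine_injective <| by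
    rw [map_zero, ← ha]
    exact RingHom.map_dotProduct toLine.toRingHom s g
  have := syzygy_eq_zero hg hX hs0 fun i => by simpa [weightedTotalDegree_toLine] using hae i
  funext i
  simp [this]

lemma eq_zero_of_cross_pencilDer_eq_zero (ha : a ⬝ᵥ toLine ∘ g = 0)
    (hD : a ⨯₃ (pencilDer ∘ a) = 0) (hae : ∀ i, weightedTotalDegree xWeight (a i) < e) :
    a = 0 := by
  by_contra ha0
  obtain ⟨γ, hγ, b, rfl, hb⟩ :=
    exists_eq_smul_dvd_derivation pencilDer (mul_eq_mul_of_cross_eq_zero hD) ha0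
  rw [smul_dotProduct, smul_eq_mul, mul_eq_zero, or_iff_right hγ] at ha
  refine ha0 ?_
  rw [eq_zero_of_pencilDer_eq_zero hg hX ha (fun i => pencilDer_eq_zero_of_dvd (hb i)), smul_zero]
  intro i
  obtain hbi | hbi := eq_or_ne (b i) 0
  · have := hae i
    rwa [Pi.smul_apply, hbi, smul_zero, ← hbi] at this
  · exact (weightedTotalDegree_le_of_dvd xWeight (Dvd.intro_left γ rfl)
      (mul_ne_zero hγ hbi)).trans_lt (hae i)

/-- The cross product of two syzygies is a multiple of `g`, whose entries have degree `e`. -/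
lemma cross_eq_zero_of_syzygies {k l : ℕ} (hkl : k + l < e)
    (ha : a ⬝ᵥ toLine ∘ g = 0) (hb : b ⬝ᵥ toLine ∘ g = 0)
    (hak : ∀ i, weightedTotalDegree xWeight (a i) ≤ k)
    (hbl : ∀ i, weightedTotalDegree xWeight (b i) ≤ l) : a ⨯₃ b = 0 := by
  have hmem (i : Fin 3) : ∃ N, toLine (X i) ^ N ∈ Ideal.span (Set.range (toLine ∘ g)) := by
    obtain ⟨N, hN⟩ := hX i
    refine ⟨N, ?_⟩
    rw [Set.range_comp, ← map_pow]
    exact Ideal.map_span (toLine : _ →ₐ[K] _) _ ▸ Ideal.mem_map_of_mem _ hN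
  obtain ⟨M, hM⟩ := hmem 0
  obtain ⟨N, hN⟩ := hmem 1
  rw [toLine_X] at hM hN
  obtain ⟨r, hr⟩ := exists_eq_smul_of_cross_eq_zero hM hN (pow_ne_zero _ (X_ne_zero 0))
    (fun _ => X_pow_dvd_of_dvd_mul (by decide)) (v := a ⨯₃ b) <| by
      rw [cross_cross_eq_smul_sub_smul', dotProduct_comm, hb, ha, zero_smul, zero_smul, sub_zero]
  have hdeg (i) : weightedTotalDegree xWeight ((a ⨯₃ b) i) ≤ k + l := by
    have hmul (i j) : weightedTotalDegree xWeight (a i * b j) ≤ k + l :=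
      (weightedTotalDegree_mul_le _ _ _).trans (add_le_add (hak i) (hbl j))
    rw [cross_apply]
    fin_cases i <;>
      exact (weightedTotalDegree_sub_le _ _ _).trans (max_le (hmul _ _) (hmul _ _))
  funext i
  by_contra hne
  have hdvd : toLine (g i) ∣ (a ⨯₃ b) i := ⟨r, by rw [hr, mul_comm]; rfl⟩
  have hgi : g i ≠ 0 := by
    rintro h
    rw [h, map_zero, zero_dvd_iff] at hdvd
    exact hne hdvd
  have hle := weightedTotalDegree_le_of_dvd xWeight hdvd hne
  rw [weightedTotalDegree_toLine, (hg i).totalDegree hgi] at hle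
  exact (hle.trans (hdeg i)).not_gt hkl

lemma eq_zero_of_syzygy_on_line {k : ℕ} (hke : 2 * k + 1 < e) (ha : a ⬝ᵥ toLine ∘ g = 0)
    (hak : ∀ i, weightedTotalDegree xWeight (a i) ≤ k) : a = 0 := by
  have hDg : pencilDer ∘ toLine ∘ g = 0 := funext fun i => pencilDer_toLine (g i)
  have hDa : (pencilDer ∘ a) ⬝ᵥ toLine ∘ g = 0 := by
    have := derivation_dotProduct pencilDer a (toLine ∘ g)
    rwa [ha, map_zero, hDg, dotProduct_zero, zero_add, eq_comm] at this
  refine eq_zero_of_cross_pencilDer_eq_zero hg hX ha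
    (cross_eq_zero_of_syzygies hg hX (l := 1 + k) (by omega) ha hDa hak fun i => ?_)
    fun i => (hak i).trans_lt (by omega)
  exact (weightedTotalDegree_xWeight_pencilDer_le _).trans (Nat.add_le_add_left (hak i) 1)

/-- The pair `a`, `b` stands for a syzygy `a + b ε` of `g` on the first order neighbourhood
`ε ^ 2 = 0` of the generic line, where `ε = x₂ - s x₀ - t x₁`. Both `∂_s a - x₀ b` and
`∂_t a - x₁ b` are syzygies on the line, hence proportional to `a`; so is the combination
`x₁ ∂_s a - x₀ ∂_t a`, which does not involve `b`. -/
lemma eq_zero_of_first_order_syzygy {k : ℕ} (hke : 2 * k + 2 < e) (ha : a ⬝ᵥ toLine ∘ g = 0)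
    (hb : b ⬝ᵥ toLine ∘ g + a ⬝ᵥ toLine ∘ pderiv 2 ∘ g = 0)
    (hak : ∀ i, weightedTotalDegree xWeight (a i) ≤ k + 1)
    (hbk : ∀ i, weightedTotalDegree xWeight (b i) ≤ k) : a = 0 ∧ b = 0 := by
  let c (n : Fin 4) (y : MvPolynomial (Fin 4) K) := pderiv n ∘ a - y • b
  have hcross (n : Fin 4) (y : MvPolynomial (Fin 4) K) (hy : weightedTotalDegree xWeight y ≤ 1)
      (hn : ∀ p, pderiv n (toLine p) = y * toLine (pderiv 2 p)) :
      a ⨯₃ c n y = 0 := by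
    refine cross_eq_zero_of_syzygies hg hX (k := k + 1) (l := 1 + k) (by omega) ha ?_ hak
      fun i => ?_
    · have hng : pderiv n ∘ toLine ∘ g = y • toLine ∘ pderiv 2 ∘ g :=
        funext fun i => hn (g i)
      have hna := derivation_dotProduct (pderiv n) a (toLine ∘ g)
      rw [ha, map_zero, hng, dotProduct_smul, smul_eq_mul] at hna
      rw [sub_dotProduct, smul_dotProduct, smul_eq_mul]
      linear_combination -hna - y * hb
    · refine (weightedTotalDegree_sub_le _ _ _).trans (max_le ?_ ?_)
      · exact (weightedTotalDegree_pderiv_le _ _ _).trans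
          ((Nat.sub_le _ _).trans ((hak i).trans_eq (add_comm _ _)))
      · exact (weightedTotalDegree_mul_le _ _ _).trans (add_le_add hy (hbk i))
  have hs := hcross 2 (X 0) (weightedTotalDegree_X _ _).le pderiv_two_toLine
  have ht := hcross 3 (X 1) (weightedTotalDegree_X _ _).le pderiv_three_toLine
  have ha0 : a = 0 := by
    refine eq_zero_of_cross_pencilDer_eq_zero hg hX ha ?_ fun i => (hak i).trans_lt (by omega)
    have hD : pencilDer ∘ a = (X 1 : MvPolynomial (Fin 4) K) • c 2 (X 0) -
        (X 0 : MvPolynomial (Fin 4) K) • c 3 (X 1) := by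
      funext i
      simp only [c, Function.comp_apply, pencilDer_apply, Pi.sub_apply, Pi.smul_apply, smul_eq_mul]
      ring
    rw [hD, map_sub, map_smul, map_smul, hs, ht, smul_zero, smul_zero, sub_zero]
  rw [ha0, zero_dotProduct, add_zero] at hb
  exact ⟨ha0, eq_zero_of_syzygy_on_line hg hX (by omega) hb hbk⟩

end SyzygiesOnLine

section GenericForm

open scoped Matrix

/-- The linear form `∑ cⱼ xⱼ` with coefficients `c`. -/
noncomputable def linearForm {R σ : Type*} [CommSemiring R] [Fintype σ] (c : σ → R) :
    MvPolynomial σ R :=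
  ∑ j, C (c j) * X j

lemma linearForm_isHomogeneous {R σ : Type*} [CommSemiring R] [Fintype σ] (c : σ → R) :
    (linearForm c).IsHomogeneous 1 :=
  IsHomogeneous.sum _ _ _ fun j _ => (isHomogeneous_X R j).C_mul (c j)

lemma map_linearForm {R S σ : Type*} [CommSemiring R] [CommSemiring S] [Fintype σ] (φ : R →+* S)
    (c : σ → R) : MvPolynomial.map φ (linearForm c) = linearForm (φ ∘ c) := by
  simp [linearForm]

variable {K : Type*} [Field K]

/-- The coefficients of the linear form `x₂ - s x₀ - t x₁` over `K[s, t]` cutting out the generic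
line. -/
noncomputable def genericCoeff : Fin 3 → MvPolynomial (Fin 2) K := ![-X 0, -X 1, 1]

/-- The restriction to the generic line of polynomials whose coefficients may themselves depend on
the line, that is, on `s` and `t`. -/
noncomputable def restrictToLine :
    MvPolynomial (Fin 3) (MvPolynomial (Fin 2) K) →+* MvPolynomial (Fin 4) K :=
  eval₂Hom (aeval ![X 2, X 3]).toRingHom ![X 0, X 1, X 2 * X 0 + X 3 * X 1]

lemma restrictToLine_C (a : MvPolynomial (Fin 2) K) :
    restrictToLine (C a) = aeval ![X 2, X 3] a :=
  eval₂Hom_C _ _ _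

lemma restrictToLine_X (i : Fin 3) : restrictToLine (X i : MvPolynomial _ (MvPolynomial _ K)) =
    ![X 0, X 1, X 2 * X 0 + X 3 * X 1] i :=
  eval₂Hom_X' _ _ _

lemma restrictToLine_map_C (p : MvPolynomial (Fin 3) K) :
    restrictToLine (MvPolynomial.map C p) = toLine p := by
  suffices restrictToLine.comp (MvPolynomial.map C) = (toLine : _ →ₐ[K] _).toRingHom from
    RingHom.congr_fun this p
  ext i
  · simp [restrictToLine_C]
  · simp [restrictToLine_X, toLine_X]

lemma restrictToLine_dotProduct_map_C (u : Fin 3 → MvPolynomial (Fin 3) (MvPolynomial (Fin 2) K))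
    (v : Fin 3 → MvPolynomial (Fin 3) K) :
    restrictToLine (u ⬝ᵥ MvPolynomial.map C ∘ v) = (restrictToLine ∘ u) ⬝ᵥ toLine ∘ v := by
  simp only [dotProduct, map_sum, map_mul, Function.comp_apply, restrictToLine_map_C]

lemma restrictToLine_genericForm : restrictToLine (linearForm (genericCoeff (K := K))) = 0 := by
  simp [linearForm, genericCoeff, Fin.sum_univ_three, restrictToLine_C, restrictToLine_X]
  ring

lemma genericForm_dvd_of_restrictToLine_eq_zero
    {p : MvPolynomial (Fin 3) (MvPolynomial (Fin 2) K)} (hp : restrictToLine p = 0) :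
    linearForm genericCoeff ∣ p := by
  let lift : MvPolynomial (Fin 4) K →ₐ[K] MvPolynomial (Fin 3) (MvPolynomial (Fin 2) K) :=
    aeval ![X 0, X 1, C (X 0), C (X 1)]
  let mk := Ideal.Quotient.mk (Ideal.span {linearForm (genericCoeff (K := K))})
  have hmk : (mk.comp lift.toRingHom).comp restrictToLine = mk := by
    ext i
    · simp [restrictToLine_C, lift]
    · fin_cases i <;> simp [restrictToLine_C, lift]
    · fin_cases i
      · simp [restrictToLine_X, lift]
      · simp [restrictToLine_X, lift]
      · refine (Ideal.Quotient.eq.2 (Ideal.mem_span_singleton.2 ⟨-1, ?_⟩))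
        simp [restrictToLine_X, lift, linearForm, genericCoeff, Fin.sum_univ_three]
        ring
  rw [← Ideal.mem_span_singleton, ← Ideal.Quotient.eq_zero_iff_mem]
  exact (RingHom.congr_fun hmk p).symm.trans (by simp [hp])

lemma pderiv_two_genericForm : pderiv 2 (linearForm (genericCoeff (K := K))) = 1 := by
  simp [linearForm, genericCoeff, Fin.sum_univ_three, pderiv_X]

lemma genericForm_sq_dvd_of_restrictToLine_eq_zero
    {p : MvPolynomial (Fin 3) (MvPolynomial (Fin 2) K)} (hp : restrictToLine p = 0)
    (hp' : restrictToLine (pderiv 2 p) = 0) : linearForm genericCoeff ^ 2 ∣ p := by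
  obtain ⟨q, rfl⟩ := genericForm_dvd_of_restrictToLine_eq_zero hp
  rw [Derivation.leibniz, pderiv_two_genericForm, smul_eq_mul, smul_eq_mul, mul_one, map_add,
    map_mul, restrictToLine_genericForm, zero_mul, zero_add] at hp'
  rw [sq]
  exact mul_dvd_mul_left _ (genericForm_dvd_of_restrictToLine_eq_zero hp')

lemma weightedTotalDegree_restrictToLine_le (p : MvPolynomial (Fin 3) (MvPolynomial (Fin 2) K)) :
    weightedTotalDegree xWeight (restrictToLine p) ≤ p.totalDegree := by
  rw [← weightedTotalDegree_one]
  refine weightedTotalDegree_gradedHom_le (fun a => ?_) (fun i => ?_) p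
  · rw [restrictToLine_C]
    induction a using MvPolynomial.induction_on with
    | C r => simp
    | add p q hp hq => simp only [map_add, hp, hq]
    | mul_X p i hp =>
      rw [map_mul, map_mul, map_mul, hp, aeval_X]
      fin_cases i <;> simp [dilation_X, xWeight]
  · rw [restrictToLine_X, ← toLine_X]
    exact dilation_toLine_X i

variable [CharZero K] {e k : ℕ} {g : Fin 3 → MvPolynomial (Fin 3) K}
  (hg : ∀ i, (g i).IsHomogeneous e) (hX : ∀ i, X i ∈ (Ideal.span (Set.range g)).radical)
include hg hX

lemma genericForm_sq_dvd_of_sq_mul_eq (hke : 2 * k + 2 < e)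
    {h : MvPolynomial (Fin 3) (MvPolynomial (Fin 2) K)}
    {r : Fin 3 → MvPolynomial (Fin 3) (MvPolynomial (Fin 2) K)}
    (hr : ∀ i, (r i).totalDegree ≤ k + 1)
    (hrel : linearForm genericCoeff ^ 2 * h = r ⬝ᵥ MvPolynomial.map C ∘ g) (i : Fin 3) :
    linearForm genericCoeff ^ 2 ∣ r i := by
  have hsyz : (restrictToLine ∘ r) ⬝ᵥ toLine ∘ g = 0 := by
    rw [← restrictToLine_dotProduct_map_C, ← hrel, map_mul, map_pow,
      restrictToLine_genericForm, zero_pow two_ne_zero, zero_mul]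
  have hsyz' : (restrictToLine ∘ pderiv 2 ∘ r) ⬝ᵥ toLine ∘ g +
      (restrictToLine ∘ r) ⬝ᵥ toLine ∘ pderiv 2 ∘ g = 0 := by
    have hpd : pderiv 2 ∘ MvPolynomial.map C ∘ g =
        MvPolynomial.map (C : K →+* MvPolynomial (Fin 2) K) ∘ pderiv 2 ∘ g :=
      funext fun i => pderiv_map
    have := congrArg (restrictToLine ∘ pderiv 2) hrel
    rw [Function.comp_apply, Function.comp_apply, derivation_dotProduct, hpd, map_add,
      restrictToLine_dotProduct_map_C, restrictToLine_dotProduct_map_C, Derivation.leibniz,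
      Derivation.leibniz_pow] at this
    rw [add_comm, ← this]
    simp [restrictToLine_genericForm]
  have hdeg (i) : weightedTotalDegree xWeight (restrictToLine (pderiv 2 (r i))) ≤ k := by
    refine (weightedTotalDegree_restrictToLine_le _).trans ?_
    rw [← weightedTotalDegree_one]
    refine (weightedTotalDegree_pderiv_le _ _ _).trans ?_
    rw [weightedTotalDegree_one]
    exact Nat.sub_le_of_le_add (hr i)
  obtain ⟨h0, h1⟩ := eq_zero_of_first_order_syzygy hg hX hke hsyz hsyz'
    (fun i => (weightedTotalDegree_restrictToLine_le _).trans (hr i)) hdeg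
  exact genericForm_sq_dvd_of_restrictToLine_eq_zero (congrFun h0 i) (congrFun h1 i)

lemma map_eval_mem_span_of_genericForm_sq_mul_eq (hke : 2 * k + 2 < e)
    {h : MvPolynomial (Fin 3) (MvPolynomial (Fin 2) K)}
    {r : Fin 3 → MvPolynomial (Fin 3) (MvPolynomial (Fin 2) K)}
    (hr : ∀ i, (r i).totalDegree ≤ k + 1)
    (hrel : linearForm genericCoeff ^ 2 * h = r ⬝ᵥ MvPolynomial.map C ∘ g) (y : Fin 2 → K) :
    MvPolynomial.map (eval y) h ∈ Ideal.span (Set.range g) := by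
  choose q hq using genericForm_sq_dvd_of_sq_mul_eq hg hX hke hr hrel
  have hne : linearForm (genericCoeff (K := K)) ≠ 0 := fun h0 => by
    simpa [h0] using pderiv_two_genericForm (K := K)
  have hh : h = q ⬝ᵥ MvPolynomial.map C ∘ g := by
    refine mul_left_cancel₀ (pow_ne_zero 2 hne) ?_
    rw [hrel, ← smul_eq_mul, ← smul_dotProduct]
    exact congrArg (· ⬝ᵥ _) (funext hq)
  rw [hh, RingHom.map_dotProduct]
  refine sum_mem fun i _ => Ideal.mul_mem_left _ _ (Ideal.subset_span ⟨i, ?_⟩)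
  have hC : (eval y).comp C = RingHom.id K := RingHom.ext fun a => eval_C a
  rw [Function.comp_apply, Function.comp_apply, map_map, hC, map_id]

end GenericForm

section GenericIndependence

open scoped Matrix

variable {σ A B : Type*} [CommRing A] [CommRing B] [IsDomain B] {s : Set (σ →₀ ℕ)} [Fintype s]
  [DecidableEq s]

lemma linearIndependent_iff_det_coeff_ne_zero {p : s → MvPolynomial σ B}
    (hp : ∀ j, p j ∈ restrictSupport B s) :
    LinearIndependent B p ↔ (Matrix.of fun i j : s => coeff i (p j)).det ≠ 0 := by
  have hker (v : s → B) : (Matrix.of fun i j : s => coeff i (p j)) *ᵥ v = 0 ↔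
      ∑ j, v j • p j = 0 := by
    have hsum (u : σ →₀ ℕ) : coeff u (∑ j, v j • p j) = ∑ j, coeff u (p j) * v j := by
      simp only [coeff_sum, coeff_smul, smul_eq_mul, mul_comm]
    refine ⟨fun hv => MvPolynomial.ext _ _ fun u => ?_, fun hv => funext fun i => ?_⟩
    · by_cases hu : u ∈ s
      · rw [hsum, coeff_zero]
        exact congrFun hv ⟨u, hu⟩
      · refine notMem_support_iff.1 fun hmem => hu ?_
        exact (sum_mem fun j _ => Submodule.smul_mem _ _ (hp j) :
          ∑ j, v j • p j ∈ restrictSupport B s) hmem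
    · exact (hsum i).symm.trans (by rw [hv, coeff_zero, Pi.zero_apply])
  rw [Fintype.linearIndependent_iff, ne_eq, ← Matrix.exists_mulVec_eq_zero_iff]
  simp only [hker, not_exists, not_and]
  exact forall_congr' fun v => (imp_congr_right fun _ => _root_.funext_iff.symm).trans
    not_imp_not.symm

lemma linearIndependent_map_iff_det_coeff_ne_zero (φ : A →+* B) {p : s → MvPolynomial σ A}
    (hp : ∀ j, p j ∈ restrictSupport A s) :
    LinearIndependent B (MvPolynomial.map φ ∘ p) ↔
      φ (Matrix.of fun i j : s => coeff i (p j)).det ≠ 0 := by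
  have hmem (j : s) : (MvPolynomial.map φ ∘ p) j ∈ restrictSupport B s :=
    (Finset.coe_subset.2 (support_map_subset φ (p j))).trans (hp j)
  rw [linearIndependent_iff_det_coeff_ne_zero hmem, RingHom.map_det]
  have hmap : (Matrix.of fun i j : s => coeff i ((MvPolynomial.map φ ∘ p) j)) =
      φ.mapMatrix (Matrix.of fun i j : s => coeff i (p j)) :=
    Matrix.ext fun i j => coeff_map φ (p j) i
  rw [hmap]

end GenericIndependence

section HilbertFunction

open scoped Matrix

variable {σ R : Type*} [CommRing R]

variable (σ R) in
/-- The basis of the forms of degree `n` consisting of the monomials of degree `n`. -/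
noncomputable def basisHomogeneousSubmodule (n : ℕ) :
    Basis {d : σ →₀ ℕ | d.degree = n} R (homogeneousSubmodule σ R n) :=
  (basisRestrictSupport R _).map
    (LinearEquiv.ofEq _ _ (homogeneousSubmodule_eq_finsupp_supported σ R n).symm)

lemma finrank_homogeneousSubmodule [Fintype σ] [Nontrivial R] (n : ℕ) :
    finrank R (homogeneousSubmodule σ R n) = (Fintype.card σ).multichoose n := by
  classical
  have hexp : {d : σ →₀ ℕ | d.degree = n} = (Finset.univ.finsuppAntidiag n : Finset (σ →₀ ℕ)) := by
    ext d
    simp [Finset.mem_finsuppAntidiag, Finsupp.degree_eq_sum]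
  rw [finrank_eq_nat_card_basis (basisHomogeneousSubmodule σ R n), hexp,
    Nat.card_coe_set_eq, Set.ncard_coe_finset, Finset.card_finsuppAntidiag_nat_eq_multichoose,
    Finset.card_univ]

instance finite_homogeneousSubmodule [Finite σ] (n : ℕ) :
    Module.Finite R (homogeneousSubmodule σ R n) :=
  Module.Finite.iff_fg.2 (homogeneousSubmodule_fg _ _ _)

lemma isHomogeneous_dotProduct {ι : Type*} [Fintype ι] {n e : ℕ} {r g : ι → MvPolynomial σ R}
    (hr : ∀ i, (r i).IsHomogeneous n) (hg : ∀ i, (g i).IsHomogeneous e) :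
    (r ⬝ᵥ g).IsHomogeneous (n + e) :=
  IsHomogeneous.sum _ _ _ fun i _ => (hr i).mul (hg i)

lemma exists_dotProduct_eq_of_mem_span {ι : Type*} [Fintype ι] {n e : ℕ} {g : ι → MvPolynomial σ R}
    (hg : ∀ i, (g i).IsHomogeneous e) {p : MvPolynomial σ R} (hp : p.IsHomogeneous (n + e))
    (hpg : p ∈ Ideal.span (Set.range g)) :
    ∃ r : ι → MvPolynomial σ R, (∀ i, (r i).IsHomogeneous n) ∧ r ⬝ᵥ g = p := by
  obtain ⟨r, rfl⟩ := Ideal.mem_span_range_iff_exists_fun.1 hpg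
  let _ : GradedAlgebra (homogeneousSubmodule σ R) := gradedAlgebra
  refine ⟨fun i => DirectSum.decompose (homogeneousSubmodule σ R) (r i) n,
    fun i => (DirectSum.decompose (homogeneousSubmodule σ R) (r i) n).2, ?_⟩
  rw [← DirectSum.decompose_of_mem_same (homogeneousSubmodule σ R) hp, DirectSum.decompose_sum,
    DFinsupp.finsetSum_apply, AddSubmonoidClass.coe_finsetSum]
  exact Finset.sum_congr rfl fun i _ =>
    (DirectSum.coe_decompose_mul_add_of_right_mem _ (hg i)).symm

/-- The piece of degree `n` of a homogeneous ideal. -/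
noncomputable def idealPiece (I : Ideal (MvPolynomial σ R)) (n : ℕ) :
    Submodule R (MvPolynomial σ R) :=
  I.restrictScalars R ⊓ homogeneousSubmodule σ R n

lemma idealPiece_le_restrictScalars (I : Ideal (MvPolynomial σ R)) (n : ℕ) :
    idealPiece I n ≤ I.restrictScalars R :=
  inf_le_left

lemma idealPiece_le_homogeneousSubmodule (I : Ideal (MvPolynomial σ R)) (n : ℕ) :
    idealPiece I n ≤ homogeneousSubmodule σ R n :=
  inf_le_right

variable {K : Type*} [Field K] {e : ℕ} {g : Fin 3 → MvPolynomial (Fin 3) K}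
  (hg : ∀ i, (g i).IsHomogeneous e)
include hg

lemma idealPiece_span_eq_bot {n : ℕ} (hn : n < e) : idealPiece (Ideal.span (Set.range g)) n = ⊥ :=
  (Submodule.eq_bot_iff _).2 fun _ hp => eq_zero_of_mem_span_of_totalDegree_lt hg hp.1
    ((IsHomogeneous.totalDegree_le hp.2).trans_lt hn)

lemma finrank_idealPiece_span (hX : ∀ i, X i ∈ (Ideal.span (Set.range g)).radical) {n : ℕ}
    (hn : n < e) :
    finrank K (idealPiece (Ideal.span (Set.range g)) (n + e)) = 3 * Nat.multichoose 3 n := by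
  let Φ : (Fin 3 → homogeneousSubmodule (Fin 3) K n) →ₗ[K] MvPolynomial (Fin 3) K :=
    (Fintype.linearCombination (MvPolynomial (Fin 3) K) g).restrictScalars K ∘ₗ
      (homogeneousSubmodule (Fin 3) K n).subtype.compLeft (Fin 3)
  have hΦ (r) : Φ r = (fun i => (r i : MvPolynomial (Fin 3) K)) ⬝ᵥ g := rfl
  have hinj : Function.Injective Φ := by
    refine (injective_iff_map_eq_zero Φ).2 fun r hr => funext fun i => Subtype.ext ?_
    exact congrFun (syzygy_eq_zero hg hX ((hΦ r).symm.trans hr) fun i =>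
      (IsHomogeneous.totalDegree_le (r i).2).trans_lt hn) i
  have hrange : LinearMap.range Φ = idealPiece (Ideal.span (Set.range g)) (n + e) := by
    ext p
    constructor
    · rintro ⟨r, rfl⟩
      exact ⟨Ideal.mem_span_range_iff_exists_fun.2 ⟨fun i => r i, rfl⟩,
        isHomogeneous_dotProduct (fun i => (r i).2) hg⟩
    · rintro ⟨hpJ, hp⟩
      obtain ⟨r, hr, rfl⟩ := exists_dotProduct_eq_of_mem_span hg hp hpJ
      exact ⟨fun i => ⟨r i, hr i⟩, rfl⟩
  rw [← hrange, LinearMap.finrank_range_of_inj hinj, finrank_pi_fintype]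
  simp [finrank_homogeneousSubmodule]

end HilbertFunction

section ComplementInDegree

variable {σ K : Type*} [Field K]

/-- `H` is a complement of the ideal `I` among the forms of degree `m`, so that it represents the
degree-`m` piece of the quotient by `I`. -/
structure IsComplementInDegree (I : Ideal (MvPolynomial σ K)) (m : ℕ)
    (H : Submodule K (MvPolynomial σ K)) : Prop where
  disjoint : Disjoint H (I.restrictScalars K)
  sup_eq : H ⊔ idealPiece I m = homogeneousSubmodule σ K m

variable {I : Ideal (MvPolynomial σ K)} {m : ℕ} {H : Submodule K (MvPolynomial σ K)}

lemma exists_isComplementInDegree (I : Ideal (MvPolynomial σ K)) (m : ℕ) :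
    ∃ H, IsComplementInDegree I m H := by
  obtain ⟨C, hC⟩ := Submodule.exists_isCompl (idealPiece I m)
  refine ⟨C ⊓ homogeneousSubmodule σ K m, disjoint_iff.2 ?_, ?_⟩
  · rw [inf_assoc, inf_comm (homogeneousSubmodule σ K m)]
    exact hC.symm.inf_eq_bot
  · rw [sup_comm, ← sup_inf_assoc_of_le C (idealPiece_le_homogeneousSubmodule I m), hC.sup_eq_top,
      top_inf_eq]

lemma IsComplementInDegree.le (hH : IsComplementInDegree I m H) : H ≤ homogeneousSubmodule σ K m :=
  le_sup_left.trans hH.sup_eq.le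

lemma IsComplementInDegree.finrank_add [Finite σ] (hH : IsComplementInDegree I m H) :
    finrank K H + finrank K (idealPiece I m) = finrank K (homogeneousSubmodule σ K m) := by
  have : FiniteDimensional K H := Submodule.finiteDimensional_of_le hH.le
  have : FiniteDimensional K (idealPiece I m) :=
    Submodule.finiteDimensional_of_le (idealPiece_le_homogeneousSubmodule I m)
  rw [← Submodule.finrank_sup_add_finrank_inf_eq, hH.sup_eq,
    (hH.disjoint.mono_right (idealPiece_le_restrictScalars I m)).eq_bot, finrank_bot, add_zero]

lemma two_mul_multichoose_three (n : ℕ) : 2 * Nat.multichoose 3 n = (n + 1) * (n + 2) := by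
  induction n with
  | zero => rw [Nat.multichoose_zero_right]
  | succ n ih =>
    rw [Nat.multichoose_succ_succ, mul_add, ih, Nat.multichoose_two]
    ring

lemma IsComplementInDegree.finrank_add_three_mul {k : ℕ} {g : Fin 3 → MvPolynomial (Fin 3) K}
    {H : Submodule K (MvPolynomial (Fin 3) K)} (hg : ∀ i, (g i).IsHomogeneous (2 * k + 3))
    (hX : ∀ i, X i ∈ (Ideal.span (Set.range g)).radical)
    (hH : IsComplementInDegree (Ideal.span (Set.range g)) (3 * k + 2) H) :
    finrank K H + 3 * Nat.multichoose 3 (k + 1) = Nat.multichoose 3 (3 * k + 4) := by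
  have hJ : 2 * finrank K (idealPiece (Ideal.span (Set.range g)) (3 * k + 2)) =
      3 * (k * (k + 1)) := by
    cases k with
    | zero => rw [idealPiece_span_eq_bot hg (by omega), finrank_bot, zero_mul, mul_zero, mul_zero]
    | succ k =>
      rw [show 3 * (k + 1) + 2 = k + (2 * (k + 1) + 3) by omega,
        finrank_idealPiece_span hg hX (by omega), mul_left_comm, two_mul_multichoose_three]
  have hsum := hH.finrank_add
  rw [finrank_homogeneousSubmodule, Fintype.card_fin] at hsum
  have := two_mul_multichoose_three (k + 1)
  have := two_mul_multichoose_three (3 * k + 2)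
  have := two_mul_multichoose_three (3 * k + 4)
  linarith

end ComplementInDegree

section SquareRelation

open scoped Matrix

variable {R S T : Type*} [CommRing R] [CommRing S] [CommRing T]

/-- The map whose zeros `(h, r)` are the relations expressing `ℓ² h` as the combination of the `g i`
with coefficients `r i`. -/
noncomputable def squareRelation (ℓ : S) (g : Fin 3 → S) : S × (Fin 3 → S) →ₗ[S] S :=
  LinearMap.mulLeft S (ℓ ^ 2) ∘ₗ LinearMap.fst S S (Fin 3 → S) -
    Fintype.linearCombination S g ∘ₗ LinearMap.snd S S (Fin 3 → S)

lemma squareRelation_apply (ℓ : S) (g : Fin 3 → S) (w : S × (Fin 3 → S)) :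
    squareRelation ℓ g w = ℓ ^ 2 * w.1 - w.2 ⬝ᵥ g :=
  rfl

lemma squareRelation_eq_zero_iff {ℓ : S} {g : Fin 3 → S} {w : S × (Fin 3 → S)} :
    squareRelation ℓ g w = 0 ↔ ℓ ^ 2 * w.1 = w.2 ⬝ᵥ g :=
  sub_eq_zero

lemma isHomogeneous_squareRelation {e m n : ℕ} {ℓ : MvPolynomial (Fin 3) R}
    {g : Fin 3 → MvPolynomial (Fin 3) R}
    {w : MvPolynomial (Fin 3) R × (Fin 3 → MvPolynomial (Fin 3) R)}
    (hℓ : ℓ.IsHomogeneous 1) (hg : ∀ i, (g i).IsHomogeneous e) (hw₁ : w.1.IsHomogeneous m)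
    (hw₂ : ∀ i, (w.2 i).IsHomogeneous n) (hdeg : m + 2 = n + e) :
    (squareRelation ℓ g w).IsHomogeneous (m + 2) := by
  rw [squareRelation_apply]
  refine IsHomogeneous.sub ?_ (hdeg ▸ isHomogeneous_dotProduct hw₂ hg)
  exact add_comm 2 m ▸ (hℓ.pow 2).mul hw₁

section MapPair

/-- The ring homomorphism induced by `φ` on the pairs `(h, r)` of polynomials that enter
`squareRelation`. -/
noncomputable def mapPair (φ : R →+* S) :
    MvPolynomial (Fin 3) R × (Fin 3 → MvPolynomial (Fin 3) R) →+*
      MvPolynomial (Fin 3) S × (Fin 3 → MvPolynomial (Fin 3) S) :=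
  (MvPolynomial.map φ).prodMap ((MvPolynomial.map φ).compLeft (Fin 3))

variable (φ : R →+* S) (w : MvPolynomial (Fin 3) R × (Fin 3 → MvPolynomial (Fin 3) R))

lemma mapPair_fst : (mapPair φ w).1 = MvPolynomial.map φ w.1 :=
  rfl

lemma mapPair_snd : (mapPair φ w).2 = MvPolynomial.map φ ∘ w.2 :=
  rfl

lemma map_squareRelation (ℓ : MvPolynomial (Fin 3) R) (g : Fin 3 → MvPolynomial (Fin 3) R) :
    MvPolynomial.map φ (squareRelation ℓ g w) =
      squareRelation (MvPolynomial.map φ ℓ) (MvPolynomial.map φ ∘ g) (mapPair φ w) := by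
  rw [squareRelation_apply, squareRelation_apply, map_sub, map_mul, map_pow,
    RingHom.map_dotProduct, mapPair_fst, mapPair_snd]

lemma mapPair_mapPair (ψ : S →+* T) : mapPair ψ (mapPair φ w) = mapPair (ψ.comp φ) w :=
  Prod.ext (map_map _ _ _) (funext fun _ => map_map _ _ _)

lemma mapPair_id : mapPair (RingHom.id R) w = w :=
  Prod.ext (map_id _) (funext fun _ => map_id _)

lemma mapPair_smul (a : R) : mapPair φ (a • w) = φ a • mapPair φ w := by
  have hmap (p : MvPolynomial (Fin 3) R) :
      MvPolynomial.map φ (a • p) = φ a • MvPolynomial.map φ p := by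
    rw [smul_eq_C_mul, map_mul, map_C, smul_eq_C_mul]
  exact Prod.ext (hmap _) (funext fun _ => hmap _)

end MapPair

variable {K : Type*} [Field K]

/-- The pairs `(h, r)` with `h` in `H` and the `r i` forms of degree `n`. -/
noncomputable def relationDomain (H : Submodule K (MvPolynomial (Fin 3) K)) (n : ℕ) :
    Submodule K (MvPolynomial (Fin 3) K × (Fin 3 → MvPolynomial (Fin 3) K)) :=
  H.prod (Submodule.pi Set.univ fun _ => homogeneousSubmodule (Fin 3) K n)

variable {H : Submodule K (MvPolynomial (Fin 3) K)} {e n k : ℕ}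

lemma range_subtype_prodMap_compLeft :
    LinearMap.range (H.subtype.prodMap
      ((homogeneousSubmodule (Fin 3) K n).subtype.compLeft (Fin 3))) = relationDomain H n := by
  simp only [LinearMap.range_prodMap, LinearMap.range_compLeft, Submodule.range_subtype,
    relationDomain]

instance finite_relationDomain [FiniteDimensional K H] :
    FiniteDimensional K (relationDomain H n) := by
  rw [← range_subtype_prodMap_compLeft]
  infer_instance

lemma finrank_relationDomain [FiniteDimensional K H] :
    finrank K (relationDomain H n) = finrank K H + 3 * Nat.multichoose 3 n := by
  rw [← range_subtype_prodMap_compLeft, LinearMap.finrank_range_of_inj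
    (H.subtype_injective.prodMap (Submodule.subtype_injective _).comp_left), finrank_prod,
    finrank_pi_fintype]
  simp [finrank_homogeneousSubmodule]

variable {g : Fin 3 → MvPolynomial (Fin 3) K} (hg : ∀ i, (g i).IsHomogeneous e)
  (hX : ∀ i, X i ∈ (Ideal.span (Set.range g)).radical)
  (hH : Disjoint H ((Ideal.span (Set.range g)).restrictScalars K))
include hg hX hH

lemma eq_zero_of_squareRelation_eq_zero (hn : n < e) {ℓ : MvPolynomial (Fin 3) K}
    {w : MvPolynomial (Fin 3) K × (Fin 3 → MvPolynomial (Fin 3) K)} (hw : w ∈ relationDomain H n)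
    (hwJ : w.1 ∈ Ideal.span (Set.range g)) (hrel : squareRelation ℓ g w = 0) : w = 0 := by
  have hw₁ : w.1 = 0 := Submodule.disjoint_def.1 hH _ hw.1 hwJ
  refine Prod.ext hw₁ (syzygy_eq_zero hg hX ?_ fun i =>
    (IsHomogeneous.totalDegree_le (hw.2 i trivial)).trans_lt hn)
  rw [← squareRelation_eq_zero_iff.1 hrel, hw₁, mul_zero]

lemma linearIndependent_squareRelation_genericForm [CharZero K] (hke : 2 * k + 2 < e) {ι : Type*}
    [Finite ι] {w : ι → MvPolynomial (Fin 3) K × (Fin 3 → MvPolynomial (Fin 3) K)}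
    (hw : ∀ j, w j ∈ relationDomain H (k + 1)) (hwi : LinearIndependent K w) :
    LinearIndependent (MvPolynomial (Fin 2) K) fun j =>
      squareRelation (linearForm genericCoeff) (MvPolynomial.map C ∘ g) (mapPair C (w j)) := by
  have := Fintype.ofFinite ι
  refine Fintype.linearIndependent_iff.2 fun v hv => ?_
  let w' (j : ι) : MvPolynomial (Fin 3) (MvPolynomial (Fin 2) K) ×
      (Fin 3 → MvPolynomial (Fin 3) (MvPolynomial (Fin 2) K)) := mapPair C (w j)
  let z := ∑ j, v j • w' j
  have hz : squareRelation (linearForm genericCoeff) (MvPolynomial.map C ∘ g) z = 0 := by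
    simpa only [z, map_sum, LinearMap.map_smul_of_tower] using hv
  have hzdeg (i : Fin 3) : (z.2 i).totalDegree ≤ k + 1 := by
    refine IsHomogeneous.totalDegree_le ?_
    rw [Prod.snd_sum, Finset.sum_apply]
    exact IsHomogeneous.sum _ _ _ fun j _ =>
      Submodule.smul_mem (homogeneousSubmodule _ _ _) (v j) (((hw j).2 i trivial).map C)
  have hC (y : Fin 2 → K) : (eval y).comp C = RingHom.id K := RingHom.ext fun a => eval_C a
  have hgy (y : Fin 2 → K) : MvPolynomial.map (eval y) ∘ MvPolynomial.map C ∘ g = g :=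
    funext fun i => by
      rw [Function.comp_apply, Function.comp_apply, map_map, hC, map_id]
  have heval (y : Fin 2 → K) : mapPair (eval y) z = ∑ j, eval y (v j) • w j := by
    simp only [z, w', map_sum, mapPair_smul, mapPair_mapPair, hC, mapPair_id]
  have hzero (y : Fin 2 → K) : mapPair (eval y) z = 0 := by
    refine eq_zero_of_squareRelation_eq_zero hg hX hH (by omega)
      (heval y ▸ sum_mem fun j _ => Submodule.smul_mem _ _ (hw j))
      (map_eval_mem_span_of_genericForm_sq_mul_eq hg hX hke hzdeg
        (squareRelation_eq_zero_iff.1 hz) y)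
      (ℓ := MvPolynomial.map (eval y) (linearForm genericCoeff)) ?_
    rw [← hgy y, ← map_squareRelation, hz, map_zero]
  refine fun j => MvPolynomial.funext fun y => ?_
  rw [map_zero]
  exact Fintype.linearIndependent_iff.1 hwi _ ((heval y).symm.trans (hzero y)) j

end SquareRelation

section GenericLinearForm

open scoped Matrix

variable {K : Type*} [Field K] {H : Submodule K (MvPolynomial (Fin 3) K)} {e k m : ℕ}
  {g : Fin 3 → MvPolynomial (Fin 3) K}

lemma squareRelation_mem_homogeneousSubmodule (hg : ∀ i, (g i).IsHomogeneous e)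
    (hH : H ≤ homogeneousSubmodule (Fin 3) K m) (hdeg : m + 2 = k + 1 + e) (c : Fin 3 → K)
    {w : MvPolynomial (Fin 3) K × (Fin 3 → MvPolynomial (Fin 3) K)}
    (hw : w ∈ relationDomain H (k + 1)) :
    squareRelation (linearForm c) g w ∈ homogeneousSubmodule (Fin 3) K (m + 2) :=
  isHomogeneous_squareRelation (linearForm_isHomogeneous c) hg (hH hw.1) (fun i => hw.2 i trivial)
    hdeg

variable [CharZero K] (hg : ∀ i, (g i).IsHomogeneous e)
  (hX : ∀ i, X i ∈ (Ideal.span (Set.range g)).radical) (hke : 2 * k + 2 < e)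
  (hH : IsComplementInDegree (Ideal.span (Set.range g)) m H) (hdeg : m + 2 = k + 1 + e)
include hg hX hke hH hdeg

-- The polynomial is the determinant of the relations formed with the universal linear form
-- `∑ Xⱼ xⱼ`; specializing to the generic line shows that it is nonzero.
lemma exists_ne_zero_linearIndependent_squareRelation
    {w : {d : Fin 3 →₀ ℕ | d.degree = m + 2} →
      MvPolynomial (Fin 3) K × (Fin 3 → MvPolynomial (Fin 3) K)}
    (hw : ∀ j, w j ∈ relationDomain H (k + 1)) (hwi : LinearIndependent K w) :
    ∃ P : MvPolynomial (Fin 3) K, P ≠ 0 ∧ ∀ c, eval c P ≠ 0 →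
      LinearIndependent K fun j => squareRelation (linearForm c) g (w j) := by
  classical
  let _ : Fintype {d : Fin 3 →₀ ℕ | d.degree = m + 2} :=
    (Finsupp.finite_of_degree_eq (m + 2)).fintype
  let A := MvPolynomial (Fin 3) K
  let p (j) : MvPolynomial (Fin 3) A :=
    squareRelation (linearForm X) (MvPolynomial.map C ∘ g) (mapPair C (w j))
  have hp (j) : p j ∈ restrictSupport A {d | d.degree = m + 2} := by
    rw [restrictSupport, ← homogeneousSubmodule_eq_finsupp_supported]
    exact isHomogeneous_squareRelation (linearForm_isHomogeneous X) (fun i => (hg i).map C)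
      ((hH.le (hw j).1).map C) (fun i => ((hw j).2 i trivial).map C) hdeg
  have hmap {B : Type _} [CommRing B] (ι : K →+* B) (φ : A →+* B) (hφ : φ.comp C = ι) :
      MvPolynomial.map φ ∘ p = fun j => squareRelation (linearForm (φ ∘ X))
        (MvPolynomial.map ι ∘ g) (mapPair ι (w j)) := by
    funext j
    have hgφ : MvPolynomial.map φ ∘ MvPolynomial.map C ∘ g = MvPolynomial.map ι ∘ g :=
      funext fun i => hφ ▸ map_map C φ (g i)
    rw [Function.comp_apply, map_squareRelation, map_linearForm, mapPair_mapPair, hφ, hgφ]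
  refine ⟨(Matrix.of fun i j => coeff i.1 (p j)).det, fun hP => ?_, fun c hc => ?_⟩
  · refine (linearIndependent_map_iff_det_coeff_ne_zero
      (aeval (genericCoeff (K := K))).toRingHom hp).1 ?_ (hP ▸ map_zero _)
    have hX' : (aeval (genericCoeff (K := K))).toRingHom ∘ (X : Fin 3 → A) = genericCoeff :=
      funext fun j => aeval_X _ j
    rw [hmap C _ (RingHom.ext fun a => aeval_C _ a), hX']
    exact linearIndependent_squareRelation_genericForm hg hX hH.disjoint hke hw hwi
  · have hc' : eval c ∘ X = c := funext fun j => eval_X (f := c) j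
    have hgid : MvPolynomial.map (RingHom.id K) ∘ g = g := funext fun i => map_id (g i)
    have hmapc := hmap (RingHom.id K) (eval c) (RingHom.ext fun a => eval_C a)
    simp only [hc', hgid, mapPair_id] at hmapc
    exact hmapc ▸ (linearIndependent_map_iff_det_coeff_ne_zero (eval c) hp).2 hc

lemma exists_ne_zero_squareRelation_bijOn
    (hrank : finrank K (relationDomain H (k + 1)) =
      finrank K (homogeneousSubmodule (Fin 3) K (m + 2))) :
    ∃ P : MvPolynomial (Fin 3) K, P ≠ 0 ∧ ∀ c, eval c P ≠ 0 →
      Set.BijOn (squareRelation (linearForm c) g) (relationDomain H (k + 1))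
        (homogeneousSubmodule (Fin 3) K (m + 2)) := by
  have : FiniteDimensional K H := Submodule.finiteDimensional_of_le hH.le
  obtain ⟨b⟩ : Nonempty (Basis {d : Fin 3 →₀ ℕ | d.degree = m + 2} K (relationDomain H (k + 1))) :=
    ⟨(basisHomogeneousSubmodule (Fin 3) K (m + 2)).map (LinearEquiv.ofFinrankEq _ _ hrank.symm)⟩
  have hbi : LinearIndependent K ((relationDomain H (k + 1)).subtype ∘ b) :=
    b.linearIndependent.map' _ (Submodule.ker_subtype _)
  obtain ⟨P, hP, hc⟩ := exists_ne_zero_linearIndependent_squareRelation hg hX hke hH hdeg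
    (fun j => (b j).2) hbi
  refine ⟨P, hP, fun c hPc => ?_⟩
  let μ : relationDomain H (k + 1) →ₗ[K] homogeneousSubmodule (Fin 3) K (m + 2) :=
    ((squareRelation (linearForm c) g).restrictScalars K).restrict
      fun _ hw => squareRelation_mem_homogeneousSubmodule hg hH.le hdeg c hw
  have hμ : Function.Injective μ :=
    LinearMap.injective_of_linearIndependent b.span_eq (LinearIndependent.of_comp
      (homogeneousSubmodule (Fin 3) K (m + 2)).subtype (hc c hPc))
  have hμ' : Function.Surjective μ :=
    (LinearMap.injective_iff_surjective_of_finrank_eq_finrank hrank).1 hμ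
  refine ⟨fun w hw => (μ ⟨w, hw⟩).2, fun w hw w' hw' h => ?_, fun p hp => ?_⟩
  · exact congrArg Subtype.val (@hμ ⟨w, hw⟩ ⟨w', hw'⟩ (Subtype.ext h))
  · obtain ⟨w, hw⟩ := hμ' ⟨p, hp⟩
    exact ⟨w, w.2, congrArg Subtype.val hw⟩

end GenericLinearForm

section QuotientPiece

open scoped Matrix

/-- The piece of degree `m` of the quotient by `I`, the image of the forms of degree `m`; over `ℂ`
this is `gradedPiece`. -/
noncomputable def quotientPiece {σ K : Type*} [Field K] (I : Ideal (MvPolynomial σ K)) (m : ℕ) :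
    Submodule K (MvPolynomial σ K ⧸ I) :=
  (homogeneousSubmodule σ K m).map (Ideal.Quotient.mkₐ K I).toLinearMap

variable {K : Type*} [Field K] {H : Submodule K (MvPolynomial (Fin 3) K)} {e m n : ℕ}
  {g : Fin 3 → MvPolynomial (Fin 3) K} {ℓ : MvPolynomial (Fin 3) K}
  (hH : IsComplementInDegree (Ideal.span (Set.range g)) m H)
include hH

lemma mem_span_of_sq_mul_mem_span (hg : ∀ i, (g i).IsHomogeneous e) (hdeg : m + 2 = n + e)
    (hℓ : ℓ.IsHomogeneous 1) (hinj : Set.InjOn (squareRelation ℓ g) (relationDomain H n))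
    {p : MvPolynomial (Fin 3) K} (hp : p.IsHomogeneous m)
    (hpJ : ℓ ^ 2 * p ∈ Ideal.span (Set.range g)) : p ∈ Ideal.span (Set.range g) := by
  obtain ⟨h, hh, q, hq, rfl⟩ := Submodule.mem_sup.1 (hH.sup_eq.ge hp)
  have hhom : (ℓ ^ 2 * h).IsHomogeneous (n + e) := hdeg ▸ add_comm 2 m ▸ (hℓ.pow 2).mul (hH.le hh)
  have hhJ : ℓ ^ 2 * h ∈ Ideal.span (Set.range g) := by
    rw [mul_add] at hpJ
    exact (Ideal.add_mem_iff_left _ (Ideal.mul_mem_left _ _ hq.1)).1 hpJ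
  obtain ⟨r, hr, hrg⟩ := exists_dotProduct_eq_of_mem_span hg hhom hhJ
  have hw : (h, r) ∈ relationDomain H n :=
    ⟨hh, fun i _ => (mem_homogeneousSubmodule n (r i)).2 (hr i)⟩
  have hzero : (h, r) = 0 := hinj hw (zero_mem (relationDomain H n))
    ((squareRelation_eq_zero_iff.2 hrg.symm).trans (map_zero _).symm)
  rw [(Prod.mk_eq_zero.1 hzero).1, zero_add]
  exact hq.1

lemma exists_sub_sq_mul_mem_span
    (hsurj : Set.SurjOn (squareRelation ℓ g) (relationDomain H n)
      (homogeneousSubmodule (Fin 3) K (m + 2)))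
    {q : MvPolynomial (Fin 3) K} (hq : q.IsHomogeneous (m + 2)) :
    ∃ p : MvPolynomial (Fin 3) K, p.IsHomogeneous m ∧
      ℓ ^ 2 * p - q ∈ Ideal.span (Set.range g) := by
  obtain ⟨⟨h, r⟩, hw, rfl⟩ := hsurj hq
  refine ⟨h, hH.le hw.1, ?_⟩
  rw [squareRelation_apply, sub_sub_cancel]
  exact Ideal.mem_span_range_iff_exists_fun.2 ⟨r, rfl⟩

end QuotientPiece

theorem generic_square_mult_iso_on_milnor_pieces_general {K : Type*} [Field K] [CharZero K]
    {d' : ℕ} (hd' : 2 ≤ d') {g : Fin 3 → MvPolynomial (Fin 3) K}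
    (hg : ∀ i, (g i).IsHomogeneous (2 * d' - 1))
    (hX : ∀ i, X i ∈ (Ideal.span (Set.range g)).radical) :
    ∃ P : MvPolynomial (Fin 3) K, P ≠ 0 ∧ ∀ c : Fin 3 → K, eval c P ≠ 0 →
      (∀ v ∈ quotientPiece (Ideal.span (Set.range g)) (3 * d' - 4),
        Ideal.Quotient.mk (Ideal.span (Set.range g)) (linearForm c) ^ 2 * v = 0 → v = 0) ∧
      (∀ w ∈ quotientPiece (Ideal.span (Set.range g)) (3 * d' - 2),
        ∃ v ∈ quotientPiece (Ideal.span (Set.range g)) (3 * d' - 4),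
          Ideal.Quotient.mk (Ideal.span (Set.range g)) (linearForm c) ^ 2 * v = w) := by
  obtain ⟨k, rfl⟩ := Nat.exists_eq_add_of_le' hd'
  rw [show 3 * (k + 2) - 4 = 3 * k + 2 by omega, show 3 * (k + 2) - 2 = 3 * k + 2 + 2 by omega]
  rw [show 2 * (k + 2) - 1 = 2 * k + 3 by omega] at hg
  obtain ⟨H, hH⟩ := exists_isComplementInDegree (Ideal.span (Set.range g)) (3 * k + 2)
  have : FiniteDimensional K H := Submodule.finiteDimensional_of_le hH.le
  have hrank : finrank K (relationDomain H (k + 1)) =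
      finrank K (homogeneousSubmodule (Fin 3) K (3 * k + 2 + 2)) := by
    rw [finrank_relationDomain, hH.finrank_add_three_mul hg hX, finrank_homogeneousSubmodule,
      Fintype.card_fin]
  have hdeg : 3 * k + 2 + 2 = k + 1 + (2 * k + 3) := by omega
  obtain ⟨P, hP, hbij⟩ :=
    exists_ne_zero_squareRelation_bijOn hg hX (by omega) hH hdeg hrank
  refine ⟨P, hP, fun c hc => ⟨?_, ?_⟩⟩
  · rintro _ ⟨p, hp, rfl⟩ hpJ
    refine Ideal.Quotient.eq_zero_iff_mem.2 (mem_span_of_sq_mul_mem_span hH hg hdeg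
      (linearForm_isHomogeneous c) (hbij c hc).injOn hp (Ideal.Quotient.eq_zero_iff_mem.1 ?_))
    rwa [map_mul, map_pow]
  · rintro _ ⟨q, hq, rfl⟩
    obtain ⟨p, hp, hpq⟩ := exists_sub_sq_mul_mem_span hH (hbij c hc).surjOn hq
    refine ⟨_, ⟨p, hp, rfl⟩, (?_ : _ = Ideal.Quotient.mk _ q)⟩
    rw [← Ideal.Quotient.eq.2 hpq, map_mul, map_pow]
    rfl

/-- **Proposition.** Let `d = 2d'` with `d' ≥ 2` and let `V(f) ⊂ ℙ^2` be a smooth plane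
curve of degree `d`.  Then for a generic linear form `ℓ = c₀x₀ + c₁x₁ + c₂x₂` (all `c`
outside the zero locus of some nonzero polynomial `P` in the coefficients — in particular
for at least one `ℓ`, since `ℂ` is infinite) multiplication by `ℓ²` induces an isomorphism
`M(f)_{3d'-4} → M(f)_{3d'-2}` of `ℂ`-vector spaces. -/
theorem generic_square_mult_iso_on_milnor_pieces
    {d' : ℕ} (hd' : 2 ≤ d')
    (f : MvPolynomial (Fin 3) ℂ) (hf : f.IsHomogeneous (2 * d'))
    (hsm : ∀ x : Fin 3 → ℂ, x ≠ 0 → ∃ i : Fin 3, eval x (pderiv i f) ≠ 0) :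
    ∃ P : MvPolynomial (Fin 3) ℂ, P ≠ 0 ∧
      ∀ c : Fin 3 → ℂ, eval c P ≠ 0 →
        (∀ v ∈ gradedPiece (jacobianIdeal f) (3 * d' - 4),
          (Ideal.Quotient.mk (jacobianIdeal f) (∑ j, MvPolynomial.C (c j) * X j)) ^ 2 * v = 0 →
            v = 0) ∧
        (∀ w ∈ gradedPiece (jacobianIdeal f) (3 * d' - 2),
          ∃ v ∈ gradedPiece (jacobianIdeal f) (3 * d' - 4),
            (Ideal.Quotient.mk (jacobianIdeal f) (∑ j, MvPolynomial.C (c j) * X j)) ^ 2 * v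
              = w) :=
  generic_square_mult_iso_on_milnor_pieces_general hd' (fun _ => hf.pderiv) fun i =>
    X_mem_radical_span (fun x hx => Set.exists_range_iff.2 (hsm x hx)) i
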